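/- Suppose z : [p₀,0] → ℝ is C¹ with z(p₀) = 0, z′(p₀) = 1, and p ↦ b(p)³z′(p) is differentiable on (p₀,0) with derivative μ·b·z; suppose v : [p₀,0] → ℝ is C¹ with v(0) = λ^{3/2}, v′(0) = g + σμ, and p ↦ b(p)³v′(p) is differentiable on (p₀,0) with derivative μ·b·v. Then there exists a not-identically-zero C¹ function w : [p₀,0] → ℝ with w(p₀) = 0, (g + σμ)·w(0) = λ^{3/2}·w′(0), and such that p ↦ b(p)³w′(p) is differentiable on (p₀,0) with derivative μ·b·w, if and only if z and v are linearly dependent. -/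

import Mathlib

open Set

/-!
The equation `(P u')' = Q u` is a first order linear system for the pair `(u, P u')`, so Grönwall's
inequality shows that a solution vanishing together with its derivative at one point vanishes
identically. Hence two solutions whose Wronskian vanishes at one point are proportional. The
boundary condition at the left endpoint says that the Wronskian of `w` and `z` vanishes there, and
the one at the right endpoint that the Wronskian of `w` and `v` does. A nontrivial `w` satisfying
both makes `z` and `v` multiples of `w`; conversely, if `z` and `v` are dependent, `w = z` works.
-/

section Calculus

variable {E : Type*} [NormedAddCommGroup E] [NormedSpace ℝ E] {f f' : ℝ → E} {a b : ℝ}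

theorem deriv_eq_zero_of_eqOn_zero {s : Set ℝ} {x : ℝ} {e : E} (hs : UniqueDiffWithinAt ℝ s x)
    (hx : x ∈ s) (hderiv : HasDerivWithinAt f e s x) (hf : EqOn f 0 s) : e = 0 :=
  hs.eq_deriv s hderiv ((hasDerivWithinAt_const x s (0 : E)).congr hf (hf hx))

theorem hasDerivWithinAt_Icc_of_hasDerivAt_Ioo (hab : a < b) (hf : ContinuousOn f (Icc a b))
    (hf' : ContinuousOn f' (Icc a b)) (hderiv : ∀ x ∈ Ioo a b, HasDerivAt f (f' x) x) :
    ∀ x ∈ Icc a b, HasDerivWithinAt f (f' x) (Icc a b) x := by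
  intro x hx
  rw [hasDerivWithinAt_iff_hasFDerivWithinAt, ← closure_Ioo hab.ne]
  refine hasFDerivWithinAt_closure_of_tendsto_fderiv
    (fun y hy => (hderiv y hy).differentiableAt.differentiableWithinAt) (convex_Ioo a b) isOpen_Ioo
    (fun y hy => ?_) ?_
  · rw [closure_Ioo hab.ne] at hy
    exact (hf y hy).mono Ioo_subset_Icc_self
  · have hlim : Filter.Tendsto (fun y => ContinuousLinearMap.toSpanSingleton ℝ (f' y))
        (nhdsWithin x (Ioo a b)) (nhds (ContinuousLinearMap.toSpanSingleton ℝ (f' x))) :=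
      ((ContinuousLinearMap.toSpanSingletonCLE (𝕜 := ℝ) (E := E)).continuous.tendsto _).comp
        ((hf' x hx).mono Ioo_subset_Icc_self)
    refine hlim.congr' ?_
    filter_upwards [self_mem_nhdsWithin] with y hy
    exact (hderiv y hy).hasFDerivAt.fderiv.symm

theorem eqOn_zero_of_norm_deriv_le_mul_norm {K : ℝ}
    (hderiv : ∀ x ∈ Icc a b, HasDerivWithinAt f (f' x) (Icc a b) x)
    (hbound : ∀ x ∈ Icc a b, ‖f' x‖ ≤ K * ‖f x‖) {q : ℝ} (hq : q ∈ Icc a b) (hfq : f q = 0) :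
    EqOn f 0 (Icc a b) := by
  have forward {g g' : ℝ → E} {c d : ℝ}
      (hg : ∀ x ∈ Icc c d, HasDerivWithinAt g (g' x) (Icc c d) x)
      (hg_bound : ∀ x ∈ Icc c d, ‖g' x‖ ≤ K * ‖g x‖) (hgc : g c = 0) :
      ∀ x ∈ Icc c d, g x = 0 :=
    eq_zero_of_abs_deriv_le_mul_abs_self_of_eq_zero_right
      (fun x hx => (hg x hx).continuousWithinAt)
      (fun x hx => (hg x (Ico_subset_Icc_self hx)).mono_of_mem_nhdsWithin
        (Icc_mem_nhdsGE_of_mem hx))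
      hgc (fun x hx => hg_bound x (Ico_subset_Icc_self hx))
  intro x hx
  rcases le_total q x with hqx | hxq
  · have hsub : Icc q b ⊆ Icc a b := Icc_subset_Icc_left hq.1
    exact forward (fun y hy => (hderiv y (hsub hy)).mono hsub) (fun y hy => hbound y (hsub hy))
      hfq x ⟨hqx, hx.2⟩
  · have hmaps : MapsTo Neg.neg (Icc (-q) (-a)) (Icc a b) := fun y hy =>
      ⟨le_neg_of_le_neg hy.2, (neg_le.1 hy.1).trans hq.2⟩
    have hreflected := forward (g := f ∘ Neg.neg) (g' := fun y => (-1 : ℝ) • f' (-y))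
      (fun y hy => (hderiv (-y) (hmaps hy)).scomp y (hasDerivAt_neg y).hasDerivWithinAt hmaps)
      (fun y hy => by simpa using hbound (-y) (hmaps hy)) (by simpa using hfq)
      (-x) ⟨neg_le_neg hxq, neg_le_neg hx.1⟩
    simpa using hreflected

end Calculus

section SturmLiouville

variable {𝕜 : Type*} [RCLike 𝕜] {P Q u u' v v' : ℝ → 𝕜} {a b : ℝ}

/-- `u` is a `C¹` solution on `[a, b]`, with derivative `u'`, of the Sturm–Liouville equation
`(P u')' = Q u`. The derivative `u'` is one-sided at the endpoints, and the equation is imposed on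
the open interval only. -/
structure IsSturmLiouvilleSolution (P Q : ℝ → 𝕜) (a b : ℝ) (u u' : ℝ → 𝕜) : Prop where
  hasDerivWithinAt : ∀ x ∈ Icc a b, HasDerivWithinAt u (u' x) (Icc a b) x
  continuousOn_deriv : ContinuousOn u' (Icc a b)
  hasDerivAt_flux : ∀ x ∈ Ioo a b, HasDerivAt (fun s => P s * u' s) (Q x * u x) x

/-- The Wronskian of `u` and `v`, whose derivatives `u'` and `v'` are passed explicitly. It
expresses both the boundary conditions and the linear dependence of solutions. -/
def wronskian (u u' v v' : ℝ → 𝕜) (x : ℝ) : 𝕜 :=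
  u x * v' x - u' x * v x

theorem wronskian_eq_zero_of_linearCombination_eq_zero {s : Set ℝ} {q : ℝ}
    (hs : UniqueDiffWithinAt ℝ s q) (hq : q ∈ s) (hu : HasDerivWithinAt u (u' q) s q)
    (hv : HasDerivWithinAt v (v' q) s q) {c d : 𝕜} (hcd : (c, d) ≠ (0, 0))
    (hdep : ∀ x ∈ s, c * u x + d * v x = 0) : wronskian u u' v v' q = 0 := by
  have hdep' : c * u' q + d * v' q = 0 :=
    deriv_eq_zero_of_eqOn_zero hs hq ((hu.const_mul c).add (hv.const_mul d)) hdep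
  rw [wronskian]
  by_cases hc : c = 0
  · have hd : d ≠ 0 := fun hd => hcd (by rw [hc, hd])
    apply mul_left_cancel₀ hd
    linear_combination u q * hdep' - u' q * hdep q hq
  · apply mul_left_cancel₀ hc
    linear_combination v' q * hdep q hq - v q * hdep'

namespace IsSturmLiouvilleSolution

theorem continuousOn (hu : IsSturmLiouvilleSolution P Q a b u u') : ContinuousOn u (Icc a b) :=
  fun x hx => (hu.hasDerivWithinAt x hx).continuousWithinAt

theorem linearCombination (hu : IsSturmLiouvilleSolution P Q a b u u')
    (hv : IsSturmLiouvilleSolution P Q a b v v') (c d : 𝕜) :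
    IsSturmLiouvilleSolution P Q a b (fun x => c * u x + d * v x)
      (fun x => c * u' x + d * v' x) where
  hasDerivWithinAt x hx :=
    ((hu.hasDerivWithinAt x hx).const_mul c).add ((hv.hasDerivWithinAt x hx).const_mul d)
  continuousOn_deriv :=
    (hu.continuousOn_deriv.const_mul c).add (hv.continuousOn_deriv.const_mul d)
  hasDerivAt_flux x hx := by
    refine ((((hu.hasDerivAt_flux x hx).const_mul c).fun_add
      ((hv.hasDerivAt_flux x hx).const_mul d)).congr_deriv ?_).congr_of_eventuallyEq
      (.of_forall fun s => ?_) <;> ring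

theorem hasDerivWithinAt_flux (hu : IsSturmLiouvilleSolution P Q a b u u') (hab : a < b)
    (hP : ContinuousOn P (Icc a b)) (hQ : ContinuousOn Q (Icc a b)) :
    ∀ x ∈ Icc a b, HasDerivWithinAt (fun s => P s * u' s) (Q x * u x) (Icc a b) x :=
  hasDerivWithinAt_Icc_of_hasDerivAt_Ioo hab (hP.mul hu.continuousOn_deriv)
    (hQ.mul hu.continuousOn) hu.hasDerivAt_flux

theorem eqOn_zero_of_eq_zero_of_deriv_eq_zero (hu : IsSturmLiouvilleSolution P Q a b u u')
    (hab : a < b) (hP : ContinuousOn P (Icc a b)) (hP_ne : ∀ x ∈ Icc a b, P x ≠ 0)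
    (hQ : ContinuousOn Q (Icc a b)) {q : ℝ} (hq : q ∈ Icc a b) (huq : u q = 0)
    (huq' : u' q = 0) : EqOn u 0 (Icc a b) := by
  obtain ⟨A, hA⟩ := isCompact_Icc.exists_bound_of_continuousOn (hP.inv₀ hP_ne)
  obtain ⟨B, hB⟩ := isCompact_Icc.exists_bound_of_continuousOn hQ
  have hbound : ∀ x ∈ Icc a b,
      ‖(u' x, Q x * u x)‖ ≤ max A B * ‖(u x, P x * u' x)‖ := by
    intro x hx
    refine norm_prod_le_iff.2 ⟨?_, ?_⟩
    · calc ‖u' x‖ = ‖(P x)⁻¹‖ * ‖P x * u' x‖ := by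
            rw [← norm_mul, inv_mul_cancel_left₀ (hP_ne x hx)]
        _ ≤ max A B * ‖(u x, P x * u' x)‖ :=
            mul_le_mul ((hA x hx).trans (le_max_left A B)) (norm_snd_le (u x, P x * u' x))
              (norm_nonneg _) ((norm_nonneg _).trans ((hA x hx).trans (le_max_left A B)))
    · calc ‖Q x * u x‖ = ‖Q x‖ * ‖u x‖ := norm_mul _ _
        _ ≤ max A B * ‖(u x, P x * u' x)‖ :=
            mul_le_mul ((hB x hx).trans (le_max_right A B)) (norm_fst_le (u x, P x * u' x))
              (norm_nonneg _) ((norm_nonneg _).trans ((hB x hx).trans (le_max_right A B)))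
  have hpair : EqOn (fun x => (u x, P x * u' x)) 0 (Icc a b) :=
    eqOn_zero_of_norm_deriv_le_mul_norm
      (fun x hx => (hu.hasDerivWithinAt x hx).prodMk (hu.hasDerivWithinAt_flux hab hP hQ x hx))
      hbound hq (by simp [huq, huq'])
  exact fun x hx => congrArg Prod.fst (hpair hx)

theorem exists_eq_const_mul_of_wronskian_eq_zero (hu : IsSturmLiouvilleSolution P Q a b u u')
    (hv : IsSturmLiouvilleSolution P Q a b v v') (hab : a < b) (hP : ContinuousOn P (Icc a b))
    (hP_ne : ∀ x ∈ Icc a b, P x ≠ 0) (hQ : ContinuousOn Q (Icc a b))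
    (hu_ne : ∃ x ∈ Icc a b, u x ≠ 0) {q : ℝ} (hq : q ∈ Icc a b)
    (hwronskian : wronskian u u' v v' q = 0) : ∃ k : 𝕜, ∀ x ∈ Icc a b, v x = k * u x := by
  rw [wronskian] at hwronskian
  obtain ⟨k, hk, hk'⟩ : ∃ k, v q = k * u q ∧ v' q = k * u' q := by
    by_cases huq : u q = 0
    · have huq' : u' q ≠ 0 := fun huq' => by
        obtain ⟨x, hx, hux⟩ := hu_ne
        exact hux (hu.eqOn_zero_of_eq_zero_of_deriv_eq_zero hab hP hP_ne hQ hq huq huq' hx)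
      have hvq : v q = 0 := by simpa [huq, huq'] using hwronskian
      exact ⟨v' q / u' q, by simp [huq, hvq], by field_simp⟩
    · refine ⟨v q / u q, by field_simp, ?_⟩
      field_simp
      linear_combination hwronskian
  have hdiff : ∀ x ∈ Icc a b, 1 * v x + -k * u x = 0 :=
    (hv.linearCombination hu 1 (-k)).eqOn_zero_of_eq_zero_of_deriv_eq_zero hab hP hP_ne hQ hq
      (by rw [hk]; ring) (by rw [hk']; ring)
  exact ⟨k, fun x hx => by linear_combination hdiff x hx⟩

end IsSturmLiouvilleSolution

theorem stmt_3_general (hab : a < b) (hP : ContinuousOn P (Icc a b))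
    (hP_ne : ∀ x ∈ Icc a b, P x ≠ 0) (hQ : ContinuousOn Q (Icc a b)) {z z' : ℝ → 𝕜}
    (hz : IsSturmLiouvilleSolution P Q a b z z') (hz_ne : ∃ x ∈ Icc a b, z x ≠ 0)
    (hv : IsSturmLiouvilleSolution P Q a b v v') :
    (∃ w w' : ℝ → 𝕜, IsSturmLiouvilleSolution P Q a b w w' ∧ (∃ x ∈ Icc a b, w x ≠ 0) ∧
        wronskian w w' z z' a = 0 ∧ wronskian w w' v v' b = 0) ↔
      ∃ c₁ c₂ : 𝕜, (c₁, c₂) ≠ (0, 0) ∧ ∀ x ∈ Icc a b, c₁ * z x + c₂ * v x = 0 := by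
  constructor
  · rintro ⟨w, w', hw, hw_ne, hwz, hwv⟩
    obtain ⟨k, hk⟩ := hw.exists_eq_const_mul_of_wronskian_eq_zero hz hab hP hP_ne hQ hw_ne
      (left_mem_Icc.2 hab.le) hwz
    obtain ⟨l, hl⟩ := hw.exists_eq_const_mul_of_wronskian_eq_zero hv hab hP hP_ne hQ hw_ne
      (right_mem_Icc.2 hab.le) hwv
    have hk_ne : k ≠ 0 := by
      rintro rfl
      obtain ⟨x, hx, hzx⟩ := hz_ne
      exact hzx (by simpa using hk x hx)
    exact ⟨l, -k, by simp [hk_ne], fun x hx => by rw [hk x hx, hl x hx]; ring⟩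
  · rintro ⟨c₁, c₂, hc, hdep⟩
    have hb : b ∈ Icc a b := right_mem_Icc.2 hab.le
    exact ⟨z, z', hz, hz_ne, by rw [wronskian]; ring,
      wronskian_eq_zero_of_linearCombination_eq_zero (uniqueDiffOn_Icc hab b hb) hb
        (hz.hasDerivWithinAt b hb) (hv.hasDerivWithinAt b hb) hc hdep⟩

end SturmLiouville

/-- With `z` the solution of `(b³z′)′ = μ b z` with `z(p₀)=0, z′(p₀)=1`, and `v`
the solution with `v(0)=λ^{3/2}, v′(0)=g+σμ`, there exists a nontrivial `C¹` solution `w` of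
`(b³w′)′ = μ b w` with `w(p₀)=0` and `(g+σμ)w(0) = λ^{3/2} w′(0)` iff `z` and `v` are
linearly dependent. -/
theorem stmt_3 (p₀ g σ lam μ : ℝ) (hp₀ : p₀ < 0) (hg : 0 < g) (hσ : 0 < σ)
    (hlam : 0 < lam) (hμ : 0 ≤ μ)
    (b : ℝ → ℝ) (hb : ContinuousOn b (Set.Icc p₀ 0)) (hbpos : ∀ p ∈ Set.Icc p₀ 0, 0 < b p)
    (z z' v v' : ℝ → ℝ)
    (hz : ∀ p ∈ Set.Icc p₀ 0, HasDerivWithinAt z (z' p) (Set.Icc p₀ 0) p)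
    (hzc : ContinuousOn z' (Set.Icc p₀ 0))
    (hz0 : z p₀ = 0) (hz1 : z' p₀ = 1)
    (hzode : ∀ p ∈ Set.Ioo p₀ 0,
      HasDerivAt (fun s => b s ^ 3 * z' s) (μ * b p * z p) p)
    (hv : ∀ p ∈ Set.Icc p₀ 0, HasDerivWithinAt v (v' p) (Set.Icc p₀ 0) p)
    (hvc : ContinuousOn v' (Set.Icc p₀ 0))
    (hv0 : v 0 = Real.sqrt lam ^ 3) (hv1 : v' 0 = g + σ * μ)
    (hvode : ∀ p ∈ Set.Ioo p₀ 0,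
      HasDerivAt (fun s => b s ^ 3 * v' s) (μ * b p * v p) p) :
    (∃ w w' : ℝ → ℝ,
        (∀ p ∈ Set.Icc p₀ 0, HasDerivWithinAt w (w' p) (Set.Icc p₀ 0) p) ∧
        ContinuousOn w' (Set.Icc p₀ 0) ∧
        (∃ p ∈ Set.Icc p₀ (0 : ℝ), w p ≠ 0) ∧
        w p₀ = 0 ∧
        (g + σ * μ) * w 0 = Real.sqrt lam ^ 3 * w' 0 ∧
        (∀ p ∈ Set.Ioo p₀ 0,
          HasDerivAt (fun s => b s ^ 3 * w' s) (μ * b p * w p) p)) ↔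
      ∃ c₁ c₂ : ℝ, (c₁, c₂) ≠ (0, 0) ∧ ∀ p ∈ Set.Icc p₀ 0, c₁ * z p + c₂ * v p = 0 := by
  have hz_sol : IsSturmLiouvilleSolution (fun s => b s ^ 3) (fun s => μ * b s) p₀ 0 z z' :=
    ⟨hz, hzc, hzode⟩
  have hz_ne : ∃ p ∈ Icc p₀ 0, z p ≠ 0 := by
    by_contra! hz_zero
    have hp₀_mem : p₀ ∈ Icc p₀ 0 := left_mem_Icc.2 hp₀.le
    have hz1_zero : z' p₀ = 0 := deriv_eq_zero_of_eqOn_zero (uniqueDiffOn_Icc hp₀ p₀ hp₀_mem)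
      hp₀_mem (hz p₀ hp₀_mem) hz_zero
    simp [hz1] at hz1_zero
  rw [← stmt_3_general hp₀ (hb.pow 3) (fun p hp => (pow_pos (hbpos p hp) 3).ne')
    (hb.const_mul μ) hz_sol hz_ne ⟨hv, hvc, hvode⟩]
  constructor
  · rintro ⟨w, w', hw, hwc, hw_ne, hw_left, hw_right, hwode⟩
    exact ⟨w, w', ⟨hw, hwc, hwode⟩, hw_ne, by simp [wronskian, hw_left, hz0],
      by rw [wronskian, hv0, hv1]; linear_combination hw_right⟩
  · rintro ⟨w, w', ⟨hw, hwc, hwode⟩, hw_ne, hw_left, hw_right⟩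
    exact ⟨w, w', hw, hwc, hw_ne, by simpa [wronskian, hz0, hz1] using hw_left,
      by rw [wronskian, hv0, hv1] at hw_right; linear_combination hw_right, hwode⟩
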